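/- Smooth approximation of a BV function preserving boundary traces: let A ⊂ ℝⁿ be a bounded open set with Lipschitz boundary and φ ∈ BV(A). Then for every δ > 0 there exists φ_δ ∈ C^∞(A) such that ∫_A |φ − φ_δ| dx < δ, ∫_A |∇φ_δ| dx ≤ |Dφ|(A) + δ, and φ = φ_δ ℋ^{n−1}-a.e. on ∂A in the sense of BV traces. -/

import Mathlib

open MeasureTheory Metric Filter Set Topology Function
open scoped ENNReal NNReal RealInnerProductSpace

noncomputable section

/-- Euclidean space `ℝⁿ`. -/
abbrev En (n : ℕ) : Type := EuclideanSpace ℝ (Fin n)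

namespace Paper

variable {n : ℕ} {F : Type*} [NormedAddCommGroup F] [NormedSpace ℝ F]

/-- The `(n-1)`-dimensional Hausdorff measure `ℋ^{n-1}` on `ℝⁿ`. -/
def Hm (n : ℕ) : Measure (En n) := μH[(n : ℝ) - 1]

/-- The `i`-th standard basis vector of `ℝⁿ`. -/
def esingle (n : ℕ) (i : Fin n) : En n := EuclideanSpace.single i (1 : ℝ)

/-- `i`-th coordinate of a point of `ℝⁿ`. -/
def coord (x : En n) (i : Fin n) : ℝ := ⟪x, esingle n i⟫

/-- Divergence of a vector field. -/
def divg (X : En n → En n) (x : En n) : ℝ :=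
  ∑ i, ⟪fderiv ℝ X x (esingle n i), esingle n i⟫

/-- Smooth scalar test functions compactly supported in `Ω`. -/
def TestFun (Ω : Set (En n)) (φ : En n → ℝ) : Prop :=
  ContDiff ℝ (⊤ : ℕ∞) φ ∧ HasCompactSupport φ ∧ tsupport φ ⊆ Ω

/-- Smooth test vector fields compactly supported in `Ω`. -/
def TestField (Ω : Set (En n)) (X : En n → En n) : Prop :=
  ContDiff ℝ (⊤ : ℕ∞) X ∧ HasCompactSupport X ∧ tsupport X ⊆ Ω

/-- Squared Frobenius norm of a linear map on Euclidean space. -/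
def frobSq (L : En n →L[ℝ] F) : ℝ := ∑ i, ‖L (esingle n i)‖ ^ 2

/-- Density ratio of a set in small balls. -/
def densRatio (A : Set (En n)) (x : En n) (r : ℝ) : ℝ≥0∞ :=
  volume (A ∩ ball x r) / volume (ball x r)

/-- Approximate limit `a` of `f` at `x`, relative to `Ω`. -/
def ApproxLimAt (Ω : Set (En n)) (f : En n → F) (x : En n) (a : F) : Prop :=
  ∀ ε > 0, Tendsto (fun r : ℝ =>
      volume ({y ∈ Ω ∩ ball x r | ε < ‖f y - a‖}) / volume (ball x r))
    (𝓝[>] 0) (𝓝 0)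

/-- One-sided approximate limit of `f` at `x` in the half space `⟪y - x, ν⟫ > 0`. -/
def ApproxLimHalf (Ω : Set (En n)) (f : En n → F) (x : En n) (ν : En n) (a : F) : Prop :=
  ∀ ε > 0, Tendsto (fun r : ℝ =>
      volume ({y ∈ Ω ∩ ball x r | 0 < ⟪y - x, ν⟫ ∧ ε < ‖f y - a‖}) / volume (ball x r))
    (𝓝[>] 0) (𝓝 0)

/-- `x` is an approximate jump point of `f` with one-sided limits `a, b` and normal `ν`. -/
def JumpTriple (Ω : Set (En n)) (f : En n → F) (x : En n) (a b : F) (ν : En n) : Prop :=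
  a ≠ b ∧ ‖ν‖ = 1 ∧ ApproxLimHalf Ω f x ν a ∧ ApproxLimHalf Ω f x (-ν) b

/-- The approximate jump set `S_f` of `f` in `Ω`. -/
def jumpSet (Ω : Set (En n)) (f : En n → F) : Set (En n) :=
  {x ∈ Ω | ∃ a b ν, JumpTriple Ω f x a b ν}

/-- Amplitude of the jump of `f` at `x` (`0` outside the jump set). -/
def jumpAmp (Ω : Set (En n)) (f : En n → F) (x : En n) : ℝ≥0∞ :=
  ⨆ (a : F) (b : F) (ν : En n) (_ : JumpTriple Ω f x a b ν), (‖a - b‖₊ : ℝ≥0∞)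

/-- Approximate differentiability of `f` at `x` with approximate gradient `L`. -/
def ApproxFDerivAt (Ω : Set (En n)) (f : En n → F) (x : En n) (L : En n →L[ℝ] F) : Prop :=
  ∀ ε > 0, Tendsto (fun r : ℝ =>
      volume ({y ∈ Ω ∩ ball x r | ε * ‖y - x‖ < ‖f y - f x - L (y - x)‖}) / volume (ball x r))
    (𝓝[>] 0) (𝓝 0)

/-- `g` is (a.e. in `Ω`) the approximate gradient of `f`. -/
def HasApproxGradOn (Ω : Set (En n)) (f : En n → F) (g : En n → (En n →L[ℝ] F)) : Prop :=
  ∀ᵐ x ∂(volume.restrict Ω), ApproxFDerivAt Ω f x (g x)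

/-- The `BV` seminorm (total variation of the distributional gradient) of a scalar function. -/
def bvSeminorm (Ω : Set (En n)) (f : En n → ℝ) : ℝ≥0∞ :=
  ⨆ X : {X : En n → En n // TestField Ω X ∧ ∀ x, ‖X x‖ ≤ 1},
    ENNReal.ofReal (∫ x in Ω, f x * divg X.1 x)

/-- The `BV` seminorm of a `ℂ ≅ ℝ²`-valued map. -/
def bvSeminormC (Ω : Set (En n)) (u : En n → ℂ) : ℝ≥0∞ :=
  ⨆ X : {X : (En n → En n) × (En n → En n) //
      TestField Ω X.1 ∧ TestField Ω X.2 ∧ ∀ x, ‖X.1 x‖ ^ 2 + ‖X.2 x‖ ^ 2 ≤ 1},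
    ENNReal.ofReal (∫ x in Ω, ((u x).re * divg X.1.1 x + (u x).im * divg X.1.2 x))

/-- Membership in `BV(Ω)`. -/
def IsBVOn (Ω : Set (En n)) (f : En n → ℝ) : Prop :=
  IntegrableOn f Ω ∧ bvSeminorm Ω f < ⊤

/-- Perimeter of `A` relative to `Ω`. -/
def perim (Ω A : Set (En n)) : ℝ≥0∞ := bvSeminorm Ω (A.indicator fun _ => (1 : ℝ))

/-- The essential (measure-theoretic) boundary of `A`, standing in for the reduced
boundary `∂*A` (they agree up to an `ℋ^{n-1}`-negligible set). -/
def essBoundary (A : Set (En n)) : Set (En n) :=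
  {x | ¬ Tendsto (fun r => densRatio A x r) (𝓝[>] 0) (𝓝 0) ∧
       ¬ Tendsto (fun r => densRatio A x r) (𝓝[>] 0) (𝓝 1)}

/-- Membership in `SBV(Ω; F)`: `f` is integrable and its distributional gradient consists
of an absolutely continuous part (given by the approximate gradient `g`) and a jump part
carried by the approximate jump set, with no Cantor part; this is expressed through the
integration-by-parts formula against smooth compactly supported vector fields. -/
def IsSBVOn (Ω : Set (En n)) (f : En n → F) : Prop :=
  IntegrableOn f Ω ∧
  ∃ (g : En n → (En n →L[ℝ] F)) (θ : En n → F) (ν : En n → En n),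
    IntegrableOn g Ω ∧
    Integrable θ ((Hm n).restrict (jumpSet Ω f)) ∧
    HasApproxGradOn Ω f g ∧
    (∀ x ∈ jumpSet Ω f, ∃ a b, JumpTriple Ω f x a b (ν x) ∧ θ x = a - b) ∧
    ∀ X : En n → En n, TestField Ω X →
      ∫ x in Ω, divg X x • f x =
        (- ∫ x in Ω, g x (X x)) - ∫ x in jumpSet Ω f, ⟪ν x, X x⟫ • θ x ∂(Hm n)

/-- Membership in `GSBV(Ω)`: every truncation is `SBV` on open sets compactly
contained in `Ω`. -/
def IsGSBVOn (Ω : Set (En n)) (f : En n → ℝ) : Prop :=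
  AEStronglyMeasurable f (volume.restrict Ω) ∧
  ∀ M : ℝ, 0 < M → ∀ U : Set (En n), IsOpen U → IsCompact (closure U) → closure U ⊆ Ω →
    IsSBVOn U fun x => max (min (f x) M) (-M)

/-- Membership in the vector-valued `GSBV(Ω; F)` (via smooth truncations). -/
def IsGSBVVecOn (Ω : Set (En n)) (f : En n → F) : Prop :=
  AEStronglyMeasurable f (volume.restrict Ω) ∧
  ∀ φ : F → ℝ, ContDiff ℝ 1 φ → HasCompactSupport (fun y => fderiv ℝ φ y) →
    ∀ U : Set (En n), IsOpen U → IsCompact (closure U) → closure U ⊆ Ω →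
      IsSBVOn U fun x => φ (f x)

/-- Membership in `GSBV^p(Ω)`. -/
def IsGSBVpOn (p : ℝ) (Ω : Set (En n)) (f : En n → ℝ) : Prop :=
  IsGSBVOn Ω f ∧ Hm n (jumpSet Ω f) < ⊤ ∧
  ∃ g : En n → (En n →L[ℝ] ℝ), HasApproxGradOn Ω f g ∧
    MemLp g (ENNReal.ofReal p) (volume.restrict Ω)

/-- Membership in `SBV^p(Ω)`. -/
def IsSBVpOn (p : ℝ) (Ω : Set (En n)) (f : En n → ℝ) : Prop :=
  IsSBVOn Ω f ∧ Hm n (jumpSet Ω f) < ⊤ ∧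
  ∃ g : En n → (En n →L[ℝ] ℝ), HasApproxGradOn Ω f g ∧
    MemLp g (ENNReal.ofReal p) (volume.restrict Ω)

/-- Membership in `SBV^p(Ω; 𝕊¹)`, for maps into `𝕊¹ ⊂ ℝ² ≅ ℂ`. -/
def IsSBVpCircleOn (p : ℝ) (Ω : Set (En n)) (u : En n → ℂ) : Prop :=
  (∀ᵐ x ∂(volume.restrict Ω), ‖u x‖ = 1) ∧
  IsSBVOn Ω u ∧ Hm n (jumpSet Ω u) < ⊤ ∧
  ∃ g : En n → (En n →L[ℝ] ℂ), HasApproxGradOn Ω u g ∧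
    MemLp g (ENNReal.ofReal p) (volume.restrict Ω)

/-- `φ` is a lifting of `u` on the set `B`, i.e. `u = e^{iφ}` a.e. on `B`. -/
def IsLiftingOn (B : Set (En n)) (u : En n → ℂ) (φ : En n → ℝ) : Prop :=
  ∀ᵐ x ∂(volume.restrict B), u x = Complex.exp (Complex.I * (φ x : ℂ))

/-- `m_p[u]`: the infimum of `ℋ^{n-1}(S_φ)` over all liftings `φ ∈ GSBV^p(Ω)` of `u`. -/
def mJump (p : ℝ) (Ω : Set (En n)) (u : En n → ℂ) : ℝ≥0∞ :=
  ⨅ (φ : En n → ℝ) (_ : IsGSBVpOn p Ω φ ∧ IsLiftingOn Ω u φ), Hm n (jumpSet Ω φ)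

/-- `g` is the weak (distributional) differential of `f` on the open set `Ω`. -/
def HasWeakDerivOn (Ω : Set (En n)) (f : En n → F) (g : En n → (En n →L[ℝ] F)) : Prop :=
  ∀ φ : En n → ℝ, TestFun Ω φ → ∀ v : En n,
    ∫ x in Ω, fderiv ℝ φ x v • f x = - ∫ x in Ω, φ x • g x v

/-- Membership in the Sobolev space `W^{1,p}(Ω; F)`. -/
def MemW1pOn (p : ℝ) (Ω : Set (En n)) (f : En n → F) : Prop :=
  ∃ g : En n → (En n →L[ℝ] F), HasWeakDerivOn Ω f g ∧
    MemLp f (ENNReal.ofReal p) (volume.restrict Ω) ∧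
    MemLp g (ENNReal.ofReal p) (volume.restrict Ω)

/-- Convergence in `L¹(Ω; F)`. -/
def L1Tendsto (Ω : Set (En n)) (fk : ℕ → En n → F) (f : En n → F) : Prop :=
  (∀ k, IntegrableOn (fk k) Ω) ∧ IntegrableOn f Ω ∧
  Tendsto (fun k => ∫ x in Ω, ‖fk k x - f x‖) atTop (𝓝 0)

/-- Weak-star convergence in `BV(Ω)` (scalar): `L¹` convergence together with a uniform
bound on the `BV` seminorms. -/
def WStarBVTendsto (Ω : Set (En n)) (fk : ℕ → En n → ℝ) (f : En n → ℝ) : Prop :=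
  L1Tendsto Ω fk f ∧ ∃ C : ℝ≥0∞, C < ⊤ ∧ ∀ k, bvSeminorm Ω (fk k) ≤ C

/-- Weak-star convergence in `BV(Ω; ℝ²)` for `ℂ`-valued maps. -/
def WStarBVTendstoC (Ω : Set (En n)) (uk : ℕ → En n → ℂ) (u : En n → ℂ) : Prop :=
  L1Tendsto Ω uk u ∧ ∃ C : ℝ≥0∞, C < ⊤ ∧ ∀ k, bvSeminormC Ω (uk k) ≤ C

/-- `Ω` has Lipschitz boundary: near every boundary point, up to a rotation, `Ω` is the
region below the graph of a Lipschitz function. -/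
def HasLipschitzBoundary (Ω : Set (En n)) : Prop :=
  ∀ x ∈ frontier Ω, ∃ r : ℝ, 0 < r ∧
    ∃ e : En n ≃ₗᵢ[ℝ] WithLp 2 (En (n - 1) × ℝ), ∃ f : En (n - 1) → ℝ, ∃ L : ℝ≥0,
      LipschitzWith L f ∧
      ∀ y ∈ ball x r,
        (y ∈ Ω ↔ f (WithLp.equiv 2 (En (n - 1) × ℝ) (e y)).1 <
          (WithLp.equiv 2 (En (n - 1) × ℝ) (e y)).2)

/-- A Caccioppoli partition of `S ⊆ Ω`: pairwise disjoint sets of finite perimeter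
covering `S` up to a Lebesgue-negligible set. -/
def CaccPartition {ι : Type*} (Ω S : Set (En n)) (Ee : ι → Set (En n)) : Prop :=
  (∀ i, Ee i ⊆ S) ∧ (∀ i, perim Ω (Ee i) < ⊤) ∧
  Pairwise (Function.onFun Disjoint Ee) ∧ volume (S \ ⋃ i, Ee i) = 0

/-- The Ambrosio–Tortorelli energy, written in terms of given gradients. -/
def atEnergy (Ω : Set (En n)) (ε : ℝ) (v : En n → ℝ)
    (gu : En n → (En n →L[ℝ] F)) (gv : En n → (En n →L[ℝ] ℝ)) : ℝ≥0∞ :=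
  ∫⁻ x in Ω, ENNReal.ofReal
    ((v x) ^ 2 * frobSq (gu x) + ε * frobSq (gv x) + (v x - 1) ^ 2 / (4 * ε))

/-- The functional `ÂT_ε^{𝕊¹}` on the domain `Â_{𝕊¹}` (the value being `∞` outside it). -/
def AThat (Ω : Set (En n)) (ε : ℝ) (u : En n → ℂ) (v : En n → ℝ) : ℝ≥0∞ :=
  ⨅ (gu : En n → (En n →L[ℝ] ℂ)) (gv : En n → (En n →L[ℝ] ℝ))
    (_ : HasWeakDerivOn Ω u gu ∧ IntegrableOn u Ω ∧ IntegrableOn gu Ω)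
    (_ : HasWeakDerivOn Ω v gv ∧ MemLp v 2 (volume.restrict Ω) ∧
          MemLp gv 2 (volume.restrict Ω))
    (_ : MemLp (fun x => v x * Real.sqrt (frobSq (gu x))) 2 (volume.restrict Ω))
    (_ : ∀ᵐ x ∂(volume.restrict Ω), 0 ≤ v x ∧ v x ≤ 1),
    atEnergy Ω ε v gu gv

/-- The functional `AT_ε^{𝕊¹}` on the domain `A_{𝕊¹}` (the value being `∞` outside it). -/
def ATcirc (Ω : Set (En n)) (ε : ℝ) (u : En n → ℂ) (v : En n → ℝ) : ℝ≥0∞ :=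
  ⨅ (gu : En n → (En n →L[ℝ] ℂ)) (gv : En n → (En n →L[ℝ] ℝ))
    (_ : HasWeakDerivOn Ω u gu ∧ MemLp u 2 (volume.restrict Ω) ∧
          MemLp gu 2 (volume.restrict Ω))
    (_ : HasWeakDerivOn Ω v gv ∧ MemLp v 2 (volume.restrict Ω) ∧
          MemLp gv 2 (volume.restrict Ω))
    (_ : ∀ᵐ x ∂(volume.restrict Ω), 0 ≤ v x ∧ v x ≤ 1),
    atEnergy Ω ε v gu gv

/-- The Mumford–Shah functional `MS_{𝕊¹}` for `𝕊¹`-valued maps. -/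
def MScirc (Ω : Set (En n)) (u : En n → ℂ) (v : En n → ℝ) : ℝ≥0∞ :=
  ⨅ (gu : En n → (En n →L[ℝ] ℂ))
    (_ : IsSBVpCircleOn 2 Ω u ∧ HasApproxGradOn Ω u gu ∧
        MemLp gu 2 (volume.restrict Ω) ∧
        (∀ᵐ x ∂(volume.restrict Ω), v x = 1)),
    (∫⁻ x in Ω, ENNReal.ofReal (frobSq (gu x))) + Hm n (jumpSet Ω u)

/-- The nonlocal functional `MS_lift`. -/
def MSlift (Ω : Set (En n)) (u : En n → ℂ) (v : En n → ℝ) : ℝ≥0∞ :=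
  ⨅ (gu : En n → (En n →L[ℝ] ℂ))
    (_ : IsSBVpCircleOn 2 Ω u ∧ HasApproxGradOn Ω u gu ∧
        MemLp gu 2 (volume.restrict Ω) ∧
        (∀ᵐ x ∂(volume.restrict Ω), v x = 1)),
    (∫⁻ x in Ω, ENNReal.ofReal (frobSq (gu x))) + mJump 2 Ω u

/-- Γ-convergence, with respect to `L¹(Ω;𝕊¹) × L¹(Ω)`, of a family of functionals
indexed by `ε → 0⁺` to a limit functional `G`. -/
def IsGammaLimitS1 (Ω : Set (En n)) (Fe : ℝ → (En n → ℂ) → (En n → ℝ) → ℝ≥0∞)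
    (G : (En n → ℂ) → (En n → ℝ) → ℝ≥0∞) : Prop :=
  (∀ (u : En n → ℂ) (v : En n → ℝ),
      (∀ᵐ x ∂(volume.restrict Ω), ‖u x‖ = 1) →
      ∀ ε : ℕ → ℝ, (∀ k, 0 < ε k) → Tendsto ε atTop (𝓝 0) →
      ∀ (uk : ℕ → En n → ℂ) (vk : ℕ → En n → ℝ),
        (∀ k, ∀ᵐ x ∂(volume.restrict Ω), ‖uk k x‖ = 1) →
        L1Tendsto Ω uk u → L1Tendsto Ω vk v →
        G u v ≤ atTop.liminf fun k => Fe (ε k) (uk k) (vk k)) ∧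
  (∀ (u : En n → ℂ) (v : En n → ℝ),
      (∀ᵐ x ∂(volume.restrict Ω), ‖u x‖ = 1) →
      IntegrableOn u Ω → IntegrableOn v Ω →
      ∀ ε : ℕ → ℝ, (∀ k, 0 < ε k) → Tendsto ε atTop (𝓝 0) →
      ∃ (uk : ℕ → En n → ℂ) (vk : ℕ → En n → ℝ),
        (∀ k, ∀ᵐ x ∂(volume.restrict Ω), ‖uk k x‖ = 1) ∧
        L1Tendsto Ω uk u ∧ L1Tendsto Ω vk v ∧
        (atTop.limsup fun k => Fe (ε k) (uk k) (vk k)) ≤ G u v)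


set_option linter.unusedSectionVars false

section Mollifier

variable {E : Type*} [NormedAddCommGroup E] [NormedSpace ℝ E] [CompleteSpace E]

/-- Mollification of `f` by the normalised bump `b`. -/
def mol (b : ContDiffBump (0 : En n)) (f : En n → E) : En n → E :=
  convolution (b.normed volume) f (ContinuousLinearMap.lsmul ℝ ℝ) volume

theorem mol_apply (b : ContDiffBump (0 : En n)) (f : En n → E) (x : En n) :
    mol b f x = ∫ y, b.normed volume y • f (x - y) := rfl

theorem mol_apply_swap (b : ContDiffBump (0 : En n)) (f : En n → E) (x : En n) :
    mol b f x = ∫ y, b.normed volume (x - y) • f y := by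
  unfold mol
  rw [convolution_lsmul_swap]

theorem mol_integrable (b : ContDiffBump (0 : En n)) {f : En n → E} (hf : Integrable f) :
    Integrable (mol b f) :=
  Integrable.integrable_convolution _ b.integrable_normed hf

theorem mol_contDiff (b : ContDiffBump (0 : En n)) {f : En n → E} (hf : LocallyIntegrable f) :
    ContDiff ℝ (⊤ : ℕ∞) (mol b f) :=
  b.hasCompactSupport_normed.contDiff_convolution_left _ b.contDiff_normed hf

theorem mol_ne_zero (b : ContDiffBump (0 : En n)) {f : En n → E} {x : En n}
    (h : mol b f x ≠ 0) : ∃ y, dist x y < b.rOut ∧ f y ≠ 0 := by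
  have h1 : x ∈ support (mol b f) := h
  have := support_convolution_subset _ h1
  rw [b.support_normed_eq] at this
  obtain ⟨u, hu, v, hv, rfl⟩ := this
  refine ⟨v, ?_, hv⟩
  simpa [dist_eq_norm] using hu

theorem mol_norm_le_mol (b : ContDiffBump (0 : En n)) (f : En n → E) (x : En n) :
    ‖mol b f x‖ ≤ mol b (fun y => ‖f y‖) x := by
  rw [mol_apply, mol_apply]
  refine (norm_integral_le_integral_norm _).trans (le_of_eq ?_)
  congr 1
  ext y
  rw [norm_smul, Real.norm_of_nonneg (b.nonneg_normed _), smul_eq_mul]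

theorem mol_norm_le (b : ContDiffBump (0 : En n)) {f : En n → E} {C : ℝ} (hC : 0 ≤ C)
    (hfm : AEStronglyMeasurable f volume)
    (hf : ∀ x, ‖f x‖ ≤ C) (x : En n) : ‖mol b f x‖ ≤ C := by
  have := dist_convolution_le (f := b.normed volume) (μ := volume) (x₀ := x) (R := b.rOut) (g := f)
    (z₀ := 0) hC (b.support_normed_eq).subset b.nonneg_normed b.integral_normed hfm
    (fun y _ => by simpa using hf y)
  rw [dist_zero_right] at this
  exact this

theorem mol_integral_norm_le (b : ContDiffBump (0 : En n)) {f : En n → E} (hf : Integrable f) :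
    ∫ x, ‖mol b f x‖ ≤ ∫ x, ‖f x‖ := by
  calc ∫ x, ‖mol b f x‖ ≤ ∫ x, mol b (fun y => ‖f y‖) x :=
        integral_mono (mol_integrable b hf).norm (mol_integrable b hf.norm)
          (mol_norm_le_mol b f)
    _ = ∫ x, ‖f x‖ := by
        unfold mol
        rw [integral_convolution _ b.integrable_normed hf.norm, b.integral_normed]
        simp

theorem mol_sub (b : ContDiffBump (0 : En n)) {f g : En n → E} (hf : LocallyIntegrable f)
    (hg : LocallyIntegrable g) (x : En n) :
    mol b (fun y => f y - g y) x = mol b f x - mol b g x := by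
  have h1 := b.hasCompactSupport_normed.convolutionExists_left
    (ContinuousLinearMap.lsmul ℝ ℝ) (b.continuous_normed (μ := volume)) hf x
  have h2 := b.hasCompactSupport_normed.convolutionExists_left
    (ContinuousLinearMap.lsmul ℝ ℝ) (b.continuous_normed (μ := volume)) hg x
  rw [mol_apply, mol_apply, mol_apply]
  refine Eq.trans ?_ (integral_sub h1.integrable h2.integrable)
  simp [smul_sub]

theorem mol_L1_close {f : En n → E} (hf : Integrable f) {ε : ℝ} (hε : 0 < ε) :
    ∃ R > 0, ∀ b : ContDiffBump (0 : En n), b.rOut ≤ R → ∫ x, ‖mol b f x - f x‖ ≤ ε := by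
  obtain ⟨g, hgc, hfg, hgcont, hgi⟩ :=
    hf.exists_hasCompactSupport_integral_sub_le (ε := ε / 3) (by positivity)
  set K := cthickening 1 (tsupport g) with hK
  have hKc : IsCompact K := hgc.isCompact.cthickening
  set M := volume.real K
  have hM : 0 ≤ M := measureReal_nonneg
  set η := ε / (3 * (M + 1)) with hη
  have hηp : 0 < η := by positivity
  obtain ⟨R, hR, hRu⟩ := Metric.uniformContinuous_iff.1
    (hgc.uniformContinuous_of_continuous hgcont) η hηp
  refine ⟨min R 1, by positivity, fun b hb => ?_⟩
  have hpt : ∀ x, ‖mol b g x - g x‖ ≤ K.indicator (fun _ => η) x := by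
    intro x
    by_cases hx : x ∈ K
    · rw [indicator_of_mem hx, ← dist_eq_norm]
      refine b.dist_normed_convolution_le hgcont.aestronglyMeasurable ?_
      intro y hy
      exact (hRu (lt_of_lt_of_le hy (hb.trans (min_le_left _ _)))).le
    · rw [indicator_of_notMem hx]
      have hgx : g x = 0 := by
        by_contra h
        exact hx (self_subset_cthickening _ (subset_tsupport _ h))
      have hmx : mol b g x = 0 := by
        by_contra h
        obtain ⟨y, hy, hgy⟩ := mol_ne_zero b h
        exact hx (mem_cthickening_of_dist_le x y 1 _ (subset_tsupport _ hgy)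
          (hy.le.trans (hb.trans (min_le_right _ _))))
      simp [hgx, hmx]
  have h3 : ∫ x, ‖mol b g x - g x‖ ≤ ε / 3 := by
    calc ∫ x, ‖mol b g x - g x‖ ≤ ∫ x, K.indicator (fun _ => η) x := by
          refine integral_mono ((mol_integrable b hgi).sub hgi).norm ?_ hpt
          exact (integrable_indicator_iff hKc.measurableSet).2
            (integrableOn_const hKc.measure_ne_top)
      _ = M * η := by
          rw [integral_indicator hKc.measurableSet]; simp [M, Measure.real]
      _ ≤ ε / 3 := by
          rw [hη]
          rw [mul_div_assoc', div_le_div_iff₀ (by positivity) (by positivity)]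
          nlinarith
  have h1 := mol_integral_norm_le b (hf.sub hgi)
  have hpt2 : ∀ x, ‖mol b f x - f x‖ ≤
      ‖mol b (f - g) x‖ + ‖mol b g x - g x‖ + ‖f x - g x‖ := by
    intro x
    have e1 : mol b (f - g) x = mol b f x - mol b g x :=
      mol_sub b hf.locallyIntegrable hgi.locallyIntegrable x
    have : mol b f x - f x = mol b (f - g) x + (mol b g x - g x) - (f x - g x) := by
      rw [e1]; abel
    rw [this]
    exact (norm_sub_le _ _).trans (add_le_add_left (norm_add_le _ _) _)
  have i1 := (mol_integrable b (hf.sub hgi)).norm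
  have i2 : Integrable (fun x => ‖mol b g x - g x‖) := ((mol_integrable b hgi).sub hgi).norm
  have i3 : Integrable (fun x => ‖f x - g x‖) := (hf.sub hgi).norm
  calc ∫ x, ‖mol b f x - f x‖
      ≤ ∫ x, (‖mol b (f - g) x‖ + ‖mol b g x - g x‖ + ‖f x - g x‖) :=
        integral_mono ((mol_integrable b hf).sub hf).norm ((i1.add i2).add i3) hpt2
    _ = (∫ x, ‖mol b (f - g) x‖) + (∫ x, ‖mol b g x - g x‖) + ∫ x, ‖f x - g x‖ := by
        rw [← integral_add i1 i2]; exact integral_add (i1.add i2) i3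
    _ ≤ ε := by
        have : ∫ x, ‖(f - g) x‖ ≤ ε / 3 := hfg
        linarith

end Mollifier

section MolInner

variable {E : Type*} [NormedAddCommGroup E] [InnerProductSpace ℝ E] [CompleteSpace E]

theorem mol_symm (b : ContDiffBump (0 : En n)) {f g : En n → E} (hf : Integrable f)
    (hg : Continuous g) (hgc : HasCompactSupport g) :
    ∫ x, ⟪mol b f x, g x⟫ = ∫ x, ⟪f x, mol b g x⟫ := by
  obtain ⟨C, hC⟩ := hgc.exists_bound_of_continuous hg
  have hgi : Integrable g := hg.integrable_of_hasCompactSupport hgc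
  have hint : Integrable (fun p : En n × En n =>
      ⟪b.normed volume (p.1 - p.2) • f p.2, g p.1⟫) (volume.prod volume) := by
    have h0 := Integrable.convolution_integrand (ContinuousLinearMap.lsmul ℝ ℝ).flip (μ := volume)
      (ν := volume) hf (b.integrable_normed (μ := volume))
    have h1 : Integrable (fun p : En n × En n => b.normed volume (p.1 - p.2) • f p.2)
      (volume.prod volume) := by simpa using h0
    have hgm : AEStronglyMeasurable (fun p : En n × En n => g p.1) (volume.prod volume) :=
      (hg.comp continuous_fst).aestronglyMeasurable
    refine (h1.norm.mul_const C).mono (h1.aestronglyMeasurable.inner hgm) ?_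
    refine Eventually.of_forall fun p => ?_
    refine (norm_inner_le_norm _ _).trans ?_
    rw [Real.norm_eq_abs, abs_mul, abs_norm]
    exact mul_le_mul_of_nonneg_left ((hC _).trans (le_abs_self _)) (norm_nonneg _)
  have hl : ∀ x, LocallyIntegrable f → ⟪mol b f x, g x⟫ =
      ∫ y, ⟪b.normed volume (x - y) • f y, g x⟫ := by
    intro x hfl
    rw [mol_apply_swap, real_inner_comm, ← integral_inner]
    · simp only [real_inner_comm]
    · have := b.hasCompactSupport_normed.convolutionExists_left
        (ContinuousLinearMap.lsmul ℝ ℝ) (b.continuous_normed (μ := volume)) hfl x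
      simpa using this.integrable_swap
  have hr : ∀ y, ⟪f y, mol b g y⟫ =
      ∫ x, ⟪b.normed volume (x - y) • f y, g x⟫ := by
    intro y
    rw [mol_apply_swap, ← integral_inner]
    · congr 1
      ext x
      rw [inner_smul_left, inner_smul_right, ← neg_sub x y, b.normed_neg]
      rfl
    · have := b.hasCompactSupport_normed.convolutionExists_left
        (ContinuousLinearMap.lsmul ℝ ℝ) (b.continuous_normed (μ := volume))
        hgi.locallyIntegrable y
      simpa using this.integrable_swap
  simp_rw [fun x => hl x hf.locallyIntegrable, hr]
  exact integral_integral_swap hint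

end MolInner

section Divergence

theorem sum_inner_esingle (v : En n) : ∑ i, ⟪v, esingle n i⟫ • esingle n i = v := by
  have := (EuclideanSpace.basisFun (Fin n) ℝ).sum_repr' v
  simpa [esingle, real_inner_comm] using this

theorem divg_smul {f : En n → ℝ} {X : En n → En n} {x : En n} (hf : DifferentiableAt ℝ f x)
    (hX : DifferentiableAt ℝ X x) :
    divg (fun y => f y • X y) x = f x * divg X x + fderiv ℝ f x (X x) := by
  unfold divg
  rw [fderiv_fun_smul hf hX]
  conv_rhs => rw [← sum_inner_esingle (X x), map_sum, Finset.mul_sum, ← Finset.sum_add_distrib]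
  refine Finset.sum_congr rfl fun i _ => ?_
  simp only [_root_.add_apply, _root_.smul_apply, inner_add_left,
    inner_smul_left, map_smul, smul_eq_mul, ContinuousLinearMap.smulRight_apply]
  simp [mul_comm]

theorem divg_sum {ι : Type*} (s : Finset ι) {X : ι → En n → En n} {x : En n}
    (hX : ∀ i ∈ s, DifferentiableAt ℝ (X i) x) :
    divg (fun y => ∑ i ∈ s, X i y) x = ∑ i ∈ s, divg (X i) x := by
  unfold divg
  rw [fderiv_fun_sum hX, Finset.sum_comm]
  refine Finset.sum_congr rfl fun i _ => ?_
  rw [_root_.sum_apply, sum_inner]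

theorem divg_continuous {X : En n → En n} (hX : ContDiff ℝ 1 X) : Continuous (divg X) := by
  unfold divg
  have := hX.continuous_fderiv one_ne_zero
  fun_prop

theorem divg_eq_zero {X : En n → En n} {x : En n} (hx : x ∉ tsupport X) : divg X x = 0 := by
  have : fderiv ℝ X x = 0 := by
    by_contra h
    exact hx (support_fderiv_subset ℝ h)
  simp [divg, this]

theorem divg_hasCompactSupport {X : En n → En n} (hX : HasCompactSupport X) :
    HasCompactSupport (divg X) := by
  refine HasCompactSupport.intro hX.isCompact fun x hx => divg_eq_zero hx

theorem integral_fderiv_zero {w : En n → ℝ} (hw : ContDiff ℝ 1 w) (hc : HasCompactSupport w)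
    (v : En n) : ∫ x, fderiv ℝ w x v = 0 := by
  have hi : Integrable (fun x => fderiv ℝ w x v) :=
    ((hw.continuous_fderiv one_ne_zero).clm_apply continuous_const).integrable_of_hasCompactSupport
      (hc.fderiv_apply ℝ v)
  have := integral_mul_fderiv_eq_neg_fderiv_mul_of_integrable (μ := (volume : Measure (En n)))
    (f := fun _ => (1 : ℝ)) (g := w) (v := v) (by simp)
    (by simpa using hi) (by simpa using hw.continuous.integrable_of_hasCompactSupport hc)
    (by intros; fun_prop) (fun x _ => (hw.differentiable one_ne_zero) x)
  simpa using this

theorem integral_divg_zero {W : En n → En n} (hW : ContDiff ℝ 1 W) (hc : HasCompactSupport W) :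
    ∫ x, divg W x = 0 := by
  unfold divg
  have hd := hW.continuous_fderiv one_ne_zero
  rw [integral_finsetSum]
  · refine Finset.sum_eq_zero fun i _ => ?_
    have hw : ContDiff ℝ 1 (fun x => ⟪W x, esingle n i⟫) := hW.inner ℝ contDiff_const
    have hwc : HasCompactSupport (fun x => ⟪W x, esingle n i⟫) :=
      hc.comp_left (g := fun v => ⟪v, esingle n i⟫) (by simp)
    rw [← integral_fderiv_zero hw hwc (esingle n i)]
    congr 1
    ext x
    rw [fderiv_inner_apply ℝ ((hW.differentiable one_ne_zero) x) (by fun_prop)]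
    simp
  · intro i _
    refine Continuous.integrable_of_hasCompactSupport (by fun_prop) ?_
    exact (hc.fderiv ℝ).comp_left (g := fun L : En n →L[ℝ] En n =>
      ⟪L (esingle n i), esingle n i⟫) (by simp)

theorem fderiv_mol (b : ContDiffBump (0 : En n)) {X : En n → En n} (hX : ContDiff ℝ 1 X)
    (hc : HasCompactSupport X) (x v : En n) :
    fderiv ℝ (mol b X) x v = mol b (fun y => fderiv ℝ X y v) x := by
  have h := hc.hasFDerivAt_convolution_right (ContinuousLinearMap.lsmul ℝ ℝ) (μ := volume)
    (b.integrable_normed.locallyIntegrable) hX x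
  have h2 : fderiv ℝ (mol b X) x = _ := h.fderiv
  rw [h2, convolution_precompR_apply _ b.integrable_normed.locallyIntegrable (hc.fderiv ℝ)
    (hX.continuous_fderiv one_ne_zero)]
  rfl

theorem divg_mol (b : ContDiffBump (0 : En n)) {X : En n → En n} (hX : ContDiff ℝ 1 X)
    (hc : HasCompactSupport X) (x : En n) : divg (mol b X) x = mol b (divg X) x := by
  have hd := hX.continuous_fderiv one_ne_zero
  have hli : ∀ i, Integrable fun y => b.normed volume y •
      fderiv ℝ X (x - y) (esingle n i) := by
    intro i
    refine Continuous.integrable_of_hasCompactSupport ?_ ?_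
    · have := b.continuous_normed (μ := volume)
      fun_prop
    · exact b.hasCompactSupport_normed.smul_right
  have hli2 : ∀ i, Integrable fun y => ⟪esingle n i, b.normed volume y •
      fderiv ℝ X (x - y) (esingle n i)⟫ := fun i => (hli i).const_inner _
  unfold divg
  rw [mol_apply]
  simp_rw [fderiv_mol b hX hc, mol_apply]
  rw [show (fun y => b.normed volume y • ∑ i, ⟪fderiv ℝ X (x - y) (esingle n i), esingle n i⟫) =
    fun y => ∑ i, ⟪esingle n i, b.normed volume y • fderiv ℝ X (x - y) (esingle n i)⟫ from ?_]
  · rw [integral_finsetSum _ fun i _ => hli2 i]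
    refine Finset.sum_congr rfl fun i _ => ?_
    rw [real_inner_comm, ← integral_inner (hli i)]
  · ext y
    rw [smul_eq_mul, Finset.mul_sum]
    refine Finset.sum_congr rfl fun i _ => ?_
    rw [inner_smul_right, real_inner_comm]

end Divergence

theorem one_le_top' : (1 : WithTop ℕ∞) ≤ ((⊤ : ℕ∞) : WithTop ℕ∞) := by exact_mod_cast le_top

theorem integral_mul_divg {A : Set (En n)} (hA : IsOpen A) {g : En n → ℝ}
    (hg : ContDiffOn ℝ (⊤ : ℕ∞) g A) {X : En n → En n} (hX : TestField A X) :
    ∫ x in A, g x * divg X x = - ∫ x in A, fderiv ℝ g x (X x) := by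
  obtain ⟨hXs, hXc, hXA⟩ := hX
  have hX1 : ContDiff ℝ 1 X := hXs.of_le one_le_top'
  have hg1 : ContDiffOn ℝ 1 g A := hg.of_le one_le_top'
  have hgat : ∀ x ∈ A, ContDiffAt ℝ 1 g x := fun x hx => hg1.contDiffAt (hA.mem_nhds hx)
  have hW : ContDiff ℝ 1 (fun x => g x • X x) := by
    rw [contDiff_iff_contDiffAt]
    intro x
    by_cases hx : x ∈ tsupport X
    · exact (hgat x (hXA hx)).smul hX1.contDiffAt
    · have : (fun x => g x • X x) =ᶠ[𝓝 x] fun _ => 0 := by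
        filter_upwards [(isClosed_tsupport X).isOpen_compl.mem_nhds hx] with y hy
        rw [image_eq_zero_of_notMem_tsupport hy, smul_zero]
      exact contDiffAt_const.congr_of_eventuallyEq this
  have hWc : HasCompactSupport (fun x => g x • X x) :=
    HasCompactSupport.intro hXc.isCompact fun x hx => by
      rw [image_eq_zero_of_notMem_tsupport hx, smul_zero]
  have h0 := integral_divg_zero hW hWc
  have hdiv : ∀ x, divg (fun x => g x • X x) x = g x * divg X x + fderiv ℝ g x (X x) := by
    intro x
    by_cases hx : x ∈ tsupport X
    · exact divg_smul ((hgat x (hXA hx)).differentiableAt one_ne_zero)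
        (hX1.differentiable one_ne_zero x)
    · have h1 : x ∉ tsupport (fun x => g x • X x) := fun h => hx (tsupport_smul_subset_right g X h)
      rw [divg_eq_zero h1, divg_eq_zero hx, image_eq_zero_of_notMem_tsupport hx]
      simp
  have hs1 : ∫ x in A, g x * divg X x = ∫ x, g x * divg X x := by
    refine setIntegral_eq_integral_of_forall_compl_eq_zero fun x hx => ?_
    rw [divg_eq_zero (fun h => hx (hXA h)), mul_zero]
  have hs2 : ∫ x in A, fderiv ℝ g x (X x) = ∫ x, fderiv ℝ g x (X x) := by
    refine setIntegral_eq_integral_of_forall_compl_eq_zero fun x hx => ?_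
    rw [image_eq_zero_of_notMem_tsupport (fun h => hx (hXA h)), map_zero]
  have i1 : Integrable fun x => g x * divg X x := by
    refine Continuous.integrable_of_hasCompactSupport ?_
      (HasCompactSupport.intro hXc.isCompact fun x hx => by rw [divg_eq_zero hx, mul_zero])
    rw [continuous_iff_continuousAt]
    intro x
    by_cases hx : x ∈ tsupport X
    · exact (hgat x (hXA hx)).continuousAt.mul (divg_continuous hX1).continuousAt
    · have : (fun x => g x * divg X x) =ᶠ[𝓝 x] fun _ => 0 := by
        filter_upwards [(isClosed_tsupport X).isOpen_compl.mem_nhds hx] with y hy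
        rw [divg_eq_zero hy, mul_zero]
      exact continuousAt_const.congr this.symm
  have i2 : Integrable fun x => fderiv ℝ g x (X x) := by
    have : Integrable (divg (fun x => g x • X x)) :=
      (divg_continuous hW).integrable_of_hasCompactSupport (divg_hasCompactSupport hWc)
    refine (this.sub i1).congr (Eventually.of_forall fun x => ?_)
    simp [hdiv]
  rw [hs1, hs2]
  simp_rw [hdiv] at h0
  rw [integral_add i1 i2] at h0
  linarith


section Cutoff

theorem supp_helper {E : Type*} [NormedAddCommGroup E] {A : Set (En n)}
    (hAb : Bornology.IsBounded A) {f : En n → E} {c : ℝ}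
    (h : ∀ x, f x ≠ 0 → 1 ≤ c * infDist x Aᶜ) :
    (∀ x ∈ tsupport f, 1 ≤ c * infDist x Aᶜ) ∧ tsupport f ⊆ A ∧ HasCompactSupport f := by
  have hcl : IsClosed {x | 1 ≤ c * infDist x Aᶜ} :=
    isClosed_le continuous_const (continuous_const.mul (continuous_infDist_pt _))
  have h1 : tsupport f ⊆ {x | 1 ≤ c * infDist x Aᶜ} := closure_minimal h hcl
  have h2 : tsupport f ⊆ A := by
    intro x hx
    by_contra hxA
    have := h1 hx
    rw [mem_ofPred_eq, infDist_zero_of_mem hxA] at this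
    norm_num at this
  exact ⟨h1, h2, Metric.isCompact_of_isClosed_isBounded (isClosed_tsupport f) (hAb.subset h2)⟩

theorem infDist_pos_of_mem {A : Set (En n)} (hA : IsOpen A) (hne : Aᶜ.Nonempty) {x : En n}
    (hx : x ∈ A) : 0 < infDist x Aᶜ :=
  (hA.isClosed_compl.notMem_iff_infDist_pos hne).1 (by simpa using hx)

theorem exists_cutoff (A : Set (En n)) :
    ∃ θ : ℕ → En n → ℝ, (∀ i, ContDiff ℝ (⊤ : ℕ∞) (θ i)) ∧ (∀ i x, 0 ≤ θ i x) ∧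
      (∀ i x, θ i x ≤ 1) ∧ (∀ (i : ℕ) x, 1 ≤ ((i : ℝ) + 1) * infDist x Aᶜ → θ i x = 1) ∧
      (∀ (i : ℕ) x, θ i x ≠ 0 → 1 ≤ ((i : ℝ) + 2) * infDist x Aᶜ) := by
  have key : ∀ i : ℕ, ∃ θ : En n → ℝ, ContDiff ℝ (⊤ : ℕ∞) θ ∧ (∀ x, 0 ≤ θ x) ∧
      (∀ x, θ x ≤ 1) ∧ (∀ x, 1 ≤ ((i : ℝ) + 1) * infDist x Aᶜ → θ x = 1) ∧
      (∀ x, θ x ≠ 0 → 1 ≤ ((i : ℝ) + 2) * infDist x Aᶜ) := by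
    intro i
    have hd := continuous_infDist_pt (Aᶜ : Set (En n))
    obtain ⟨f, hf0, hf1, hf⟩ := exists_contMDiffMap_zero_one_of_isClosed
      (n := (⊤ : ℕ∞)) (modelWithCornersSelf ℝ (En n))
      (s := {x : En n | ((i : ℝ) + 2) * infDist x Aᶜ ≤ 1})
      (t := {x : En n | 1 ≤ ((i : ℝ) + 1) * infDist x Aᶜ})
      (isClosed_le (continuous_const.mul hd) continuous_const)
      (isClosed_le continuous_const (continuous_const.mul hd))
      (by
        rw [Set.disjoint_left]
        intro x hx hx'
        simp only [mem_ofPred_eq] at hx hx'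
        have h0 : infDist x Aᶜ ≤ 0 := by linarith
        have : ((i : ℝ) + 1) * infDist x Aᶜ ≤ 0 :=
          mul_nonpos_of_nonneg_of_nonpos (by positivity) h0
        linarith)
    refine ⟨f, f.contMDiff.contDiff, fun x => (hf x).1, fun x => (hf x).2,
      fun x hx => hf1 hx, fun x hx => ?_⟩
    by_contra hlt
    exact hx (hf0 (not_le.1 hlt).le)
  choose θ h1 h2 h3 h4 h5 using key
  exact ⟨θ, h1, h2, h3, h4, h5⟩

theorem contDiff_smul_of_tsupport {E : Type*} [NormedAddCommGroup E] [NormedSpace ℝ E]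
    {A : Set (En n)} (hA : IsOpen A)
    {θ : En n → ℝ} (hθ : ContDiff ℝ (⊤ : ℕ∞) θ) (hs : tsupport θ ⊆ A) {H : En n → E}
    (hH : ContDiffOn ℝ (⊤ : ℕ∞) H A) : ContDiff ℝ (⊤ : ℕ∞) (fun x => θ x • H x) := by
  rw [contDiff_iff_contDiffAt]
  intro x
  by_cases hx : x ∈ tsupport θ
  · exact hθ.contDiffAt.smul (hH.contDiffAt (hA.mem_nhds (hs hx)))
  · have : (fun x => θ x • H x) =ᶠ[𝓝 x] fun _ => 0 := by
      filter_upwards [(isClosed_tsupport θ).isOpen_compl.mem_nhds hx] with y hy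
      rw [image_eq_zero_of_notMem_tsupport hy, zero_smul]
    exact contDiffAt_const.congr_of_eventuallyEq this

end Cutoff

section Duality

theorem lintegral_fderiv_le {A : Set (En n)} (hA : IsOpen A) (hAb : Bornology.IsBounded A)
    (hne : Aᶜ.Nonempty) {g : En n → ℝ} (hg : ContDiffOn ℝ (⊤ : ℕ∞) g A) {C : ℝ}
    (H : ∀ X : En n → En n, TestField A X → (∀ x, ‖X x‖ ≤ 1) → ∫ x in A, g x * divg X x ≤ C) :
    ∫⁻ x in A, ‖fderiv ℝ g x‖ₑ ≤ ENNReal.ofReal C := by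
  obtain ⟨θ, hθs, hθ0, hθ1, hθone, hθsupp⟩ := exists_cutoff A
  set G : En n → En n := fun x => (InnerProductSpace.toDual ℝ (En n)).symm (fderiv ℝ g x) with hG
  have hGs : ContDiffOn ℝ (⊤ : ℕ∞) G A := by
    have h1 : ContDiffOn ℝ (⊤ : ℕ∞) (fderiv ℝ g) A :=
      hg.fderiv_of_isOpen hA (by exact_mod_cast le_top)
    exact (InnerProductSpace.toDual ℝ (En n)).symm.contDiff.comp_contDiffOn h1
  have hGn : ∀ x, ‖G x‖ = ‖fderiv ℝ g x‖ := fun x => by simp [hG]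
  have hGi : ∀ x v, fderiv ℝ g x v = ⟪G x, v⟫ := fun x v => by
    rw [hG, InnerProductSpace.toDual_symm_apply]
  set τ : ℕ → ℝ := fun N => 1 / ((N : ℝ) + 1) with hτ
  have hτp : ∀ N, 0 < τ N := fun N => by positivity
  set q : ℕ → En n → ℝ := fun N x => Real.sqrt (τ N ^ 2 + ‖G x‖ ^ 2) with hq
  have hqp : ∀ N x, 0 < q N x := fun N x => Real.sqrt_pos.2 (by have := hτp N; positivity)
  have hqG : ∀ N x, ‖G x‖ ≤ q N x := fun N x => Real.le_sqrt_of_sq_le (by nlinarith [hτp N])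
  have hqs : ∀ N, ContDiffOn ℝ (⊤ : ℕ∞) (q N) A := by
    intro N
    refine ContDiffOn.sqrt (contDiffOn_const.add (hGs.norm_sq ℝ)) ?_
    intro x _
    have := hτp N
    positivity
  have hHs : ∀ N, ContDiffOn ℝ (⊤ : ℕ∞) (fun x => -((q N x)⁻¹ • G x)) A := fun N =>
    (((hqs N).inv fun x _ => (hqp N x).ne').smul hGs).neg
  set X : ℕ → En n → En n := fun N x => θ N x • (-((q N x)⁻¹ • G x)) with hX
  set Fn : ℕ → En n → ℝ := fun N x => θ N x * (‖G x‖ ^ 2 / q N x) with hFn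
  have hsupp := fun N => supp_helper hAb (hθsupp N)
  have hF0 : ∀ N x, 0 ≤ Fn N x := fun N x =>
    mul_nonneg (hθ0 N x) (div_nonneg (by positivity) (hqp N x).le)
  have hFc : ∀ N, Continuous (Fn N) := fun N =>
    (contDiff_smul_of_tsupport hA (hθs N) (hsupp N).2.1
      ((hGs.norm_sq ℝ).div (hqs N) fun x _ => (hqp N x).ne')).continuous
  have hFcs : ∀ N, HasCompactSupport (Fn N) := fun N =>
    HasCompactSupport.intro (hsupp N).2.2.isCompact fun x hx => by
      simp only [hFn]
      rw [image_eq_zero_of_notMem_tsupport hx, zero_mul]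
  have hXt : ∀ N, TestField A (X N) := by
    intro N
    have hz : ∀ x, X N x ≠ 0 → 1 ≤ ((N : ℝ) + 2) * infDist x Aᶜ := by
      intro x hx
      apply hθsupp N x
      intro h0
      exact hx (by simp only [hX]; rw [h0, zero_smul])
    obtain ⟨-, ha, hb⟩ := supp_helper hAb hz
    exact ⟨contDiff_smul_of_tsupport hA (hθs N) (hsupp N).2.1 (hHs N), hb, ha⟩
  have hX1 : ∀ N x, ‖X N x‖ ≤ 1 := by
    intro N x
    simp only [hX]
    rw [norm_smul, norm_neg, norm_smul, norm_inv, Real.norm_of_nonneg (hqp N x).le,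
      Real.norm_of_nonneg (hθ0 N x)]
    have : (q N x)⁻¹ * ‖G x‖ ≤ 1 := by
      rw [inv_mul_le_iff₀ (hqp N x), mul_one]; exact hqG N x
    exact mul_le_one₀ (hθ1 N x) (by have := hqp N x; positivity) this
  have hXF : ∀ N x, fderiv ℝ g x (X N x) = - Fn N x := by
    intro N x
    simp only [hX, hFn]
    rw [hGi, inner_smul_right, inner_neg_right, inner_smul_right, real_inner_self_eq_norm_sq]
    ring
  have hFle : ∀ N, ∫ x in A, Fn N x ≤ C := by
    intro N
    have h1 := H (X N) (hXt N) (hX1 N)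
    rw [integral_mul_divg hA hg (hXt N)] at h1
    simp_rw [hXF] at h1
    rwa [integral_neg, neg_neg] at h1
  have hFl : ∀ N, ∫⁻ x in A, ENNReal.ofReal (Fn N x) ≤ ENNReal.ofReal C := by
    intro N
    rw [← ofReal_integral_eq_lintegral_ofReal
      ((hFc N).integrable_of_hasCompactSupport (hFcs N)).integrableOn
      (Eventually.of_forall (hF0 N))]
    exact ENNReal.ofReal_le_ofReal (hFle N)
  have hlim : ∀ x ∈ A, Tendsto (fun N => ENNReal.ofReal (Fn N x)) atTop
      (𝓝 ‖fderiv ℝ g x‖ₑ) := by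
    intro x hx
    rw [← ofReal_norm, ← hGn]
    refine ENNReal.tendsto_ofReal ?_
    by_cases h0 : ‖G x‖ = 0
    · simp [hFn, h0]
    · have hd := infDist_pos_of_mem hA hne hx
      have hev : ∀ᶠ N : ℕ in atTop, ‖G x‖ ^ 2 / q N x = Fn N x := by
        obtain ⟨M, hM⟩ := exists_nat_gt (1 / infDist x Aᶜ)
        filter_upwards [eventually_ge_atTop M] with N hN
        have : θ N x = 1 := by
          apply hθone
          rw [div_lt_iff₀ hd] at hM
          have : (M : ℝ) ≤ N := by exact_mod_cast hN
          nlinarith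
        simp only [hFn, this, one_mul]
      refine Tendsto.congr' hev ?_
      have ht : Tendsto τ atTop (𝓝 0) := tendsto_one_div_add_atTop_nhds_zero_nat
      have hqt : Tendsto (fun N => q N x) atTop (𝓝 ‖G x‖) := by
        have : Tendsto (fun N => q N x) atTop (𝓝 (Real.sqrt (0 ^ 2 + ‖G x‖ ^ 2))) :=
          (Real.continuous_sqrt.tendsto _).comp ((ht.pow 2).add_const _)
        simpa [Real.sqrt_sq (norm_nonneg _)] using this
      have := (tendsto_const_nhds (x := ‖G x‖ ^ 2)).div hqt h0
      rwa [show ‖G x‖ ^ 2 / ‖G x‖ = ‖G x‖ by field_simp] at this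
  calc ∫⁻ x in A, ‖fderiv ℝ g x‖ₑ
      = ∫⁻ x in A, liminf (fun N => ENNReal.ofReal (Fn N x)) atTop := by
        refine setLIntegral_congr_fun hA.measurableSet fun x hx => ?_
        exact (hlim x hx).liminf_eq.symm
    _ ≤ liminf (fun N => ∫⁻ x in A, ENNReal.ofReal (Fn N x)) atTop :=
        lintegral_liminf_le fun N => (hFc N).measurable.ennreal_ofReal
    _ ≤ ENNReal.ofReal C := by
        refine liminf_le_of_frequently_le' (Frequently.of_forall hFl)

end Duality

section Partition

theorem exists_partition (A : Set (En n)) :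
    ∃ ζ : ℕ → En n → ℝ, (∀ i, ContDiff ℝ (⊤ : ℕ∞) (ζ i)) ∧ (∀ i x, 0 ≤ ζ i x) ∧
      (∀ (i : ℕ) x, ζ i x ≠ 0 → 1 ≤ ((i : ℝ) + 2) * infDist x Aᶜ) ∧
      (∀ (i : ℕ) x, ζ i x ≠ 0 → (i : ℝ) * infDist x Aᶜ ≤ 1) ∧
      (∀ (N : ℕ) x, ∑ i ∈ Finset.range N, ζ i x ≤ 1) ∧
      (∀ (N : ℕ) x, 1 ≤ (N : ℝ) * infDist x Aᶜ → ∑ i ∈ Finset.range N, ζ i x = 1) := by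
  obtain ⟨θ, hθs, hθ0, hθ1, hθone, hθsupp⟩ := exists_cutoff A
  have hstep : ∀ (i : ℕ) x, θ i x ≠ 0 → θ (i + 1) x = 1 := by
    intro i x h
    apply hθone
    have := hθsupp i x h
    push_cast
    linarith
  have hone : ∀ (i : ℕ) x, 1 ≤ ((i : ℝ) + 1) * infDist x Aᶜ → θ (i + 1) x = 1 := by
    intro i x h
    exact hstep i x (by rw [hθone i x h]; exact one_ne_zero)
  let ζ : ℕ → En n → ℝ := fun i => Nat.casesOn i (θ 0) (fun j x => θ (j + 1) x - θ j x)
  have hz0 : ζ 0 = θ 0 := rfl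
  have hzs : ∀ j x, ζ (j + 1) x = θ (j + 1) x - θ j x := fun j x => rfl
  have hsum : ∀ N x, ∑ i ∈ Finset.range (N + 1), ζ i x = θ N x := by
    intro N x
    induction N with
    | zero => simp [hz0]
    | succ k ih => rw [Finset.sum_range_succ, ih, hzs]; ring
  refine ⟨ζ, ?_, ?_, ?_, ?_, ?_, ?_⟩
  · rintro (_ | j)
    · exact hθs 0
    · exact (hθs (j + 1)).sub (hθs j)
  · rintro (_ | j) x
    · exact hθ0 0 x
    · rw [hzs]
      by_cases h : θ j x = 0
      · rw [h, sub_zero]; exact hθ0 _ x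
      · rw [hstep j x h]; linarith [hθ1 j x]
  · rintro (_ | j) x h
    · exact hθsupp 0 x h
    · by_cases h1 : θ (j + 1) x = 0
      · have h2 : θ j x ≠ 0 := by
          intro h2; exact h (by rw [hzs, h1, h2, sub_zero])
        rw [hstep j x h2] at h1
        exact absurd h1 one_ne_zero
      · exact hθsupp _ x h1
  · rintro (_ | j) x h
    · simp
    · by_contra hlt
      push Not at hlt
      push_cast at hlt
      exact h (by rw [hzs, hθone j x hlt.le, hone j x hlt.le, sub_self])
  · rintro (_ | N) x
    · simp
    · rw [hsum]; exact hθ1 N x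
  · rintro (_ | N) x h
    · norm_num at h
    · rw [hsum]; push_cast at h; exact hθone N x h

end Partition

section Step

theorem integrable_smul_cc {E : Type*} [NormedAddCommGroup E] [NormedSpace ℝ E]
    {ψ : En n → ℝ} (hψ : Integrable ψ) {c : En n → E} (hc : Continuous c)
    (hcc : HasCompactSupport c) : Integrable (fun x => ψ x • c x) := by
  obtain ⟨C, hC⟩ := hcc.exists_bound_of_continuous hc
  refine (hψ.norm.mul_const C).mono (hψ.aestronglyMeasurable.smul hc.aestronglyMeasurable) ?_
  refine Eventually.of_forall fun x => ?_
  rw [norm_smul, Real.norm_eq_abs (‖ψ x‖ * C), abs_mul, abs_norm]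
  exact mul_le_mul_of_nonneg_left ((hC x).trans (le_abs_self _)) (norm_nonneg _)

/-- The gradient of a scalar function. -/
def grd (f : En n → ℝ) (x : En n) : En n :=
  (InnerProductSpace.toDual ℝ (En n)).symm (fderiv ℝ f x)

theorem inner_grd (f : En n → ℝ) (x v : En n) : ⟪grd f x, v⟫ = fderiv ℝ f x v := by
  rw [grd, InnerProductSpace.toDual_symm_apply]

theorem grd_continuous {f : En n → ℝ} (hf : ContDiff ℝ 1 f) : Continuous (grd f) :=
  (InnerProductSpace.toDual ℝ (En n)).symm.continuous.comp (hf.continuous_fderiv one_ne_zero)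

theorem grd_compact {f : En n → ℝ} (hf : HasCompactSupport f) : HasCompactSupport (grd f) :=
  (hf.fderiv ℝ).comp_left (g := fun L => (InnerProductSpace.toDual ℝ (En n)).symm L) (by simp)

theorem mol_compact (b : ContDiffBump (0 : En n)) {X : En n → En n} (hX : HasCompactSupport X) :
    HasCompactSupport (mol b X) :=
  HasCompactSupport.convolution _ b.hasCompactSupport_normed hX

theorem smul_compact {f : En n → ℝ} {X : En n → En n} (hf : HasCompactSupport f) :
    HasCompactSupport (fun x => f x • X x) :=
  HasCompactSupport.intro hf.isCompact fun x hx => by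
    rw [image_eq_zero_of_notMem_tsupport hx, zero_smul]

theorem step (b : ContDiffBump (0 : En n)) {ψ ζ : En n → ℝ} (hψ : Integrable ψ)
    (hζ : ContDiff ℝ 1 ζ) (hζc : HasCompactSupport ζ) {X : En n → En n} (hX : ContDiff ℝ 1 X)
    (hXc : HasCompactSupport X) (hX1 : ∀ x, ‖X x‖ ≤ 1) {ε : ℝ}
    (hε : ∫ x, ‖mol b (fun y => ψ y • grd ζ y) x - ψ x • grd ζ x‖ ≤ ε) :
    ∫ x, mol b (fun y => ψ y • ζ y) x * divg X x ≤
      (∫ x, ψ x * divg (fun y => ζ y • mol b X y) x) + ε - ∫ x, ψ x * fderiv ℝ ζ x (X x) := by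
  have hdc := divg_continuous hX
  have hdcc := divg_hasCompactSupport hXc
  have hfi : Integrable (fun y => ψ y • ζ y) := integrable_smul_cc hψ hζ.continuous hζc
  have hFi : Integrable (fun y => ψ y • grd ζ y) :=
    integrable_smul_cc hψ (grd_continuous hζ) (grd_compact hζc)
  have hXi : Integrable X := hX.continuous.integrable_of_hasCompactSupport hXc
  have hmX : ContDiff ℝ 1 (mol b X) := (mol_contDiff b hXi.locallyIntegrable).of_le one_le_top'
  have hY : ContDiff ℝ 1 (fun y => ζ y • mol b X y) := hζ.smul hmX
  have hYc : HasCompactSupport (fun y => ζ y • mol b X y) := smul_compact hζc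
  have e1 : ∫ x, mol b (fun y => ψ y • ζ y) x * divg X x
      = ∫ x, (ψ x • ζ x) * mol b (divg X) x := by
    have := mol_symm b hfi hdc hdcc
    simpa [mul_comm] using this
  have iY : Integrable fun x => ψ x * divg (fun y => ζ y • mol b X y) x :=
    integrable_smul_cc hψ (divg_continuous hY) (divg_hasCompactSupport hYc)
  have iF : Integrable fun x => ⟪ψ x • grd ζ x, mol b X x⟫ := by
    have h2 : Continuous fun x => ⟪grd ζ x, mol b X x⟫ :=
      (grd_continuous hζ).inner hmX.continuous
    have h3 : HasCompactSupport fun x => ⟪grd ζ x, mol b X x⟫ :=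
      HasCompactSupport.intro (grd_compact hζc).isCompact fun x hx => by
        rw [image_eq_zero_of_notMem_tsupport hx, inner_zero_left]
    refine (integrable_smul_cc hψ h2 h3).congr (Eventually.of_forall fun x => ?_)
    simp [inner_smul_left]
  have iFX : ∀ {f : En n → En n}, Integrable f → Integrable fun x => ⟪f x, X x⟫ := by
    intro f hf
    refine hf.norm.mono (hf.aestronglyMeasurable.inner hX.continuous.aestronglyMeasurable) ?_
    refine Eventually.of_forall fun x => ?_
    rw [norm_norm]
    refine (norm_inner_le_norm _ _).trans ?_
    exact mul_le_of_le_one_right (norm_nonneg _) (hX1 x)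
  have e2 : ∫ x, (ψ x • ζ x) * mol b (divg X) x =
      (∫ x, ψ x * divg (fun y => ζ y • mol b X y) x) - ∫ x, ⟪ψ x • grd ζ x, mol b X x⟫ := by
    rw [← integral_sub iY iF]
    congr 1
    ext x
    rw [divg_smul (hζ.differentiable one_ne_zero x) (hmX.differentiable one_ne_zero x),
      divg_mol b hX hXc, real_inner_smul_left, inner_grd, smul_eq_mul]
    ring
  have e3 := mol_symm b hFi hX.continuous hXc
  have e4 : ∫ x, ψ x * fderiv ℝ ζ x (X x) = ∫ x, ⟪ψ x • grd ζ x, X x⟫ := by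
    congr 1
    ext x
    rw [real_inner_smul_left, inner_grd]
  have hmi := mol_integrable b hFi
  have hsub : Integrable fun x => mol b (fun y => ψ y • grd ζ y) x - ψ x • grd ζ x :=
    hmi.sub hFi
  have e5 : (∫ x, ⟪ψ x • grd ζ x, X x⟫) - (∫ x, ⟪mol b (fun y => ψ y • grd ζ y) x, X x⟫) ≤ ε := by
    rw [← integral_sub (iFX hFi) (iFX hmi)]
    refine le_trans ?_ hε
    refine integral_mono ((iFX hFi).sub (iFX hmi)) hsub.norm fun x => ?_
    change ⟪ψ x • grd ζ x, X x⟫ - ⟪mol b (fun y => ψ y • grd ζ y) x, X x⟫ ≤ _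
    rw [← inner_sub_left, norm_sub_rev]
    refine (real_inner_le_norm _ _).trans ?_
    exact mul_le_of_le_one_right (norm_nonneg _) (hX1 x)
  rw [e1, e2, e4, ← e3]
  linarith

end Step

section Assembly

theorem exists_data {A : Set (En n)} (hAb : Bornology.IsBounded A) {ψ : En n → ℝ}
    (hψ : Integrable ψ) (ε : ℕ → ℝ) (hε : ∀ i, 0 < ε i) :
    ∃ (ζ : ℕ → En n → ℝ) (b : ℕ → ContDiffBump (0 : En n)),
      (∀ i, ContDiff ℝ (⊤ : ℕ∞) (ζ i)) ∧ (∀ i x, 0 ≤ ζ i x) ∧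
      (∀ i, HasCompactSupport (ζ i)) ∧ (∀ i, tsupport (ζ i) ⊆ A) ∧
      (∀ (i : ℕ) x, ζ i x ≠ 0 → 1 ≤ ((i : ℝ) + 3) * infDist x Aᶜ) ∧
      (∀ (i : ℕ) x, ζ i x ≠ 0 → (i : ℝ) * infDist x Aᶜ ≤ 2) ∧
      (∀ (N : ℕ) x, ∑ i ∈ Finset.range N, ζ i x ≤ 1) ∧
      (∀ (N : ℕ) x, 1 ≤ (N : ℝ) * infDist x Aᶜ → ∑ i ∈ Finset.range N, ζ i x = 1) ∧
      (∀ (i : ℕ) x, mol (b i) (fun y => ψ y • ζ i y) x ≠ 0 →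
        1 ≤ ((i : ℝ) + 3) * infDist x Aᶜ) ∧
      (∀ (i : ℕ) x, mol (b i) (fun y => ψ y • ζ i y) x ≠ 0 → (i : ℝ) * infDist x Aᶜ ≤ 2) ∧
      (∀ i, ∫ x, ‖mol (b i) (fun y => ψ y • ζ i y) x - ψ x • ζ i x‖ ≤ ε i) ∧
      (∀ i, ∫ x, ‖mol (b i) (fun y => ψ y • grd (ζ i) y) x - ψ x • grd (ζ i) x‖ ≤ ε i) := by
  obtain ⟨ζ, hs, h0, hl, hu, hle, h1⟩ := exists_partition A
  have hsupp := fun i : ℕ => supp_helper hAb (hl i)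
  have hb : ∀ i : ℕ, ∃ b : ContDiffBump (0 : En n),
      b.rOut ≤ 1 / (((i : ℝ) + 2) * (i + 3)) ∧
      (∫ x, ‖mol b (fun y => ψ y • ζ i y) x - ψ x • ζ i x‖ ≤ ε i) ∧
      (∫ x, ‖mol b (fun y => ψ y • grd (ζ i) y) x - ψ x • grd (ζ i) x‖ ≤ ε i) := by
    intro i
    have hs1 : ContDiff ℝ 1 (ζ i) := (hs i).of_le one_le_top'
    obtain ⟨R1, hR1, H1⟩ := mol_L1_close
      (integrable_smul_cc hψ hs1.continuous (hsupp i).2.2) (hε i)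
    obtain ⟨R2, hR2, H2⟩ := mol_L1_close
      (integrable_smul_cc hψ (grd_continuous hs1) (grd_compact (hsupp i).2.2)) (hε i)
    have hR3 : (0 : ℝ) < 1 / (((i : ℝ) + 2) * (i + 3)) := by positivity
    have hm : 0 < min (min R1 R2) (1 / (((i : ℝ) + 2) * (i + 3))) :=
      lt_min (lt_min hR1 hR2) hR3
    refine ⟨⟨min (min R1 R2) (1 / (((i : ℝ) + 2) * (i + 3))) / 2,
      min (min R1 R2) (1 / (((i : ℝ) + 2) * (i + 3))), by linarith, by linarith⟩, ?_, ?_, ?_⟩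
    · exact min_le_right _ _
    · exact H1 _ ((min_le_left _ _).trans (min_le_left _ _))
    · exact H2 _ ((min_le_left _ _).trans (min_le_right _ _))
  choose b hbr hb1 hb2 using hb
  have key : ∀ (i : ℕ) x, mol (b i) (fun y => ψ y • ζ i y) x ≠ 0 →
      ∃ y, dist x y * (((i : ℝ) + 2) * (i + 3)) ≤ 1 ∧ ζ i y ≠ 0 := by
    intro i x hx
    obtain ⟨y, hy, hy2⟩ := mol_ne_zero _ hx
    refine ⟨y, ?_, fun h => hy2 (by simp [h])⟩
    have := hy.le.trans (hbr i)
    rwa [le_div_iff₀ (by positivity)] at this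
  refine ⟨ζ, b, hs, h0, fun i => (hsupp i).2.2, fun i => (hsupp i).2.1, ?_, ?_, hle, h1, ?_, ?_,
    hb1, hb2⟩
  · intro i x hx
    have := hl i x hx
    have := infDist_nonneg (x := x) (s := Aᶜ)
    linarith
  · intro i x hx
    have := hu i x hx
    linarith
  · intro i x hx
    obtain ⟨y, hy, hy2⟩ := key i x hx
    have h1 := hl i y hy2
    have h2 := infDist_le_infDist_add_dist (s := Aᶜ) (x := y) (y := x)
    rw [dist_comm] at h2
    have hi : (0 : ℝ) ≤ i := Nat.cast_nonneg i
    have h3 : ((i : ℝ) + 2) * infDist y Aᶜ ≤ ((i : ℝ) + 2) * (infDist x Aᶜ + dist x y) :=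
      mul_le_mul_of_nonneg_left h2 (by positivity)
    have h4 : (i : ℝ) + 3 ≤ ((i : ℝ) + 3) * (((i : ℝ) + 2) * (infDist x Aᶜ + dist x y)) := by
      nlinarith
    have h5 : (i : ℝ) + 2 ≤ ((i : ℝ) + 2) * (((i : ℝ) + 3) * infDist x Aᶜ) := by nlinarith
    nlinarith
  · intro i x hx
    obtain ⟨y, hy, hy2⟩ := key i x hx
    have h1 := hu i y hy2
    have h2 := infDist_le_infDist_add_dist (s := Aᶜ) (x := x) (y := y)
    have hi : (0 : ℝ) ≤ i := Nat.cast_nonneg i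
    have h3 : (i : ℝ) * infDist x Aᶜ ≤ (i : ℝ) * (infDist y Aᶜ + dist x y) :=
      mul_le_mul_of_nonneg_left h2 (by positivity)
    have h4 := dist_nonneg (x := x) (y := y)
    have h5 : (i : ℝ) * dist x y ≤ dist x y * (((i : ℝ) + 2) * (i + 3)) := by
      nlinarith [mul_nonneg hi h4, mul_nonneg (mul_nonneg hi hi) h4]
    nlinarith

end Assembly
section Glue

theorem tsum_loc {A : Set (En n)} {s : ℕ → En n → ℝ}
    (hu : ∀ (i : ℕ) x, s i x ≠ 0 → (i : ℝ) * infDist x Aᶜ ≤ 2) {N : ℕ} {x : En n}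
    (h : 2 < (N : ℝ) * infDist x Aᶜ) : ∑' i, s i x = ∑ i ∈ Finset.range N, s i x := by
  apply tsum_eq_sum
  intro i hi
  by_contra hc
  have h1 := hu i x hc
  have h2 : (N : ℝ) ≤ i := by exact_mod_cast (by simpa using hi)
  have := mul_le_mul_of_nonneg_right h2 (infDist_nonneg (x := x) (s := Aᶜ))
  linarith

theorem exists_N {d : ℝ} (hd : 0 < d) : ∃ N : ℕ, 2 < (N : ℝ) * d := by
  obtain ⟨N, hN⟩ := exists_nat_gt (2 / d)
  exact ⟨N, by rwa [div_lt_iff₀ hd] at hN⟩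

theorem tsum_contDiffOn {A : Set (En n)} (hA : IsOpen A) (hne : Aᶜ.Nonempty)
    {s : ℕ → En n → ℝ} (hs : ∀ i, ContDiff ℝ (⊤ : ℕ∞) (s i))
    (hu : ∀ (i : ℕ) x, s i x ≠ 0 → (i : ℝ) * infDist x Aᶜ ≤ 2) :
    ContDiffOn ℝ (⊤ : ℕ∞) (fun x => ∑' i, s i x) A := by
  intro x hx
  obtain ⟨N, hN⟩ := exists_N (infDist_pos_of_mem hA hne hx)
  have hc : ContDiff ℝ (⊤ : ℕ∞) (fun x => ∑ i ∈ Finset.range N, s i x) :=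
    ContDiff.sum fun i _ => hs i
  refine (hc.contDiffAt.congr_of_eventuallyEq ?_).contDiffWithinAt
  have hcont : Continuous fun y : En n => (N : ℝ) * infDist y Aᶜ :=
    continuous_const.mul (continuous_infDist_pt _)
  filter_upwards [(isOpen_lt continuous_const hcont).mem_nhds hN] with y hy
  exact tsum_loc hu hy

theorem glue_L1 {A : Set (En n)} (hA : IsOpen A) (hne : Aᶜ.Nonempty)
    {ψ : En n → ℝ} {s ζ : ℕ → En n → ℝ}
    (hm : ∀ i, AEStronglyMeasurable (fun x => s i x - ψ x • ζ i x) volume)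
    (hu : ∀ (i : ℕ) x, s i x ≠ 0 → (i : ℝ) * infDist x Aᶜ ≤ 2)
    (h1 : ∀ (N : ℕ) x, 1 ≤ (N : ℝ) * infDist x Aᶜ → ∑ i ∈ Finset.range N, ζ i x = 1)
    {S : Set (En n)} (hS : MeasurableSet S) (hSA : S ⊆ A) :
    ∫⁻ x in S, ‖ψ x - ∑' i, s i x‖ₑ ≤ ∑' i, ∫⁻ x in S, ‖s i x - ψ x • ζ i x‖ₑ := by
  rw [← lintegral_tsum (fun i => (hm i).restrict.enorm)]
  refine setLIntegral_mono' hS fun x hx => ?_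
  obtain ⟨N, hN⟩ := exists_N (infDist_pos_of_mem hA hne (hSA hx))
  have e : ψ x - ∑' i, s i x = -∑ i ∈ Finset.range N, (s i x - ψ x • ζ i x) := by
    rw [tsum_loc hu hN, Finset.sum_sub_distrib]
    simp only [smul_eq_mul]
    rw [← Finset.mul_sum, h1 N x (by linarith)]
    ring
  rw [e, enorm_neg]
  exact (enorm_sum_le _ _).trans (ENNReal.sum_le_tsum _)

theorem tsum_geo {c : ℝ} (hc : 0 ≤ c) :
    ∑' i : ℕ, ENNReal.ofReal (c * (1 / 2) ^ (i + 2)) = ENNReal.ofReal (c / 2) := by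
  have hh : HasSum (fun i : ℕ => c * (1 / 2 : ℝ) ^ (i + 2)) (c / 2) := by
    have h := (hasSum_geometric_two.mul_left (c / 4))
    have e1 : (fun i : ℕ => c * (1 / 2 : ℝ) ^ (i + 2)) = fun i => c / 4 * (1 / 2) ^ i := by
      funext i; rw [pow_add]; ring
    have e2 : c / 2 = c / 4 * 2 := by ring
    rw [e1, e2]
    exact h
  rw [← ENNReal.ofReal_tsum_of_nonneg (fun i => by positivity) hh.summable, hh.tsum_eq]

theorem sum_geo_le {c : ℝ} (hc : 0 ≤ c) (N : ℕ) :
    ∑ i ∈ Finset.range N, c * (1 / 2 : ℝ) ^ (i + 2) ≤ c / 2 := by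
  have hh : HasSum (fun i : ℕ => c * (1 / 2 : ℝ) ^ (i + 2)) (c / 2) := by
    have h := (hasSum_geometric_two.mul_left (c / 4))
    have e1 : (fun i : ℕ => c * (1 / 2 : ℝ) ^ (i + 2)) = fun i => c / 4 * (1 / 2) ^ i := by
      funext i; rw [pow_add]; ring
    have e2 : c / 2 = c / 4 * 2 := by ring
    rw [e1, e2]
    exact h
  exact sum_le_hasSum _ (fun i _ => by positivity) hh

theorem glue_dual {A : Set (En n)} (hA : IsOpen A) (hne : Aᶜ.Nonempty)
    {φ ψ : En n → ℝ} (hψd : ψ = A.indicator φ) (hψ : Integrable ψ) (hV : bvSeminorm A φ < ⊤)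
    {ζ : ℕ → En n → ℝ} {b : ℕ → ContDiffBump (0 : En n)}
    (hs : ∀ i, ContDiff ℝ (⊤ : ℕ∞) (ζ i)) (h0 : ∀ i x, 0 ≤ ζ i x)
    (hc : ∀ i, HasCompactSupport (ζ i)) (ht : ∀ i, tsupport (ζ i) ⊆ A)
    (hle : ∀ (N : ℕ) x, ∑ i ∈ Finset.range N, ζ i x ≤ 1)
    (h1 : ∀ (N : ℕ) x, 1 ≤ (N : ℝ) * infDist x Aᶜ → ∑ i ∈ Finset.range N, ζ i x = 1)
    (hu : ∀ (i : ℕ) x, mol (b i) (fun y => ψ y • ζ i y) x ≠ 0 → (i : ℝ) * infDist x Aᶜ ≤ 2)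
    {ε : ℕ → ℝ} {c : ℝ} (hεc : ∀ N, ∑ i ∈ Finset.range N, ε i ≤ c)
    (hF : ∀ i, ∫ x, ‖mol (b i) (fun y => ψ y • grd (ζ i) y) x - ψ x • grd (ζ i) x‖ ≤ ε i)
    {X : En n → En n} (hX : TestField A X) (hX1 : ∀ x, ‖X x‖ ≤ 1) :
    ∫ x in A, (∑' i, mol (b i) (fun y => ψ y • ζ i y) x) * divg X x
      ≤ (bvSeminorm A φ).toReal + c := by
  obtain ⟨hXs, hXc, hXA⟩ := hX
  have hX1' : ContDiff ℝ 1 X := hXs.of_le one_le_top'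
  have hs1 : ∀ i, ContDiff ℝ 1 (ζ i) := fun i => (hs i).of_le one_le_top'
  -- a uniform N
  obtain ⟨N, hN⟩ : ∃ N : ℕ, ∀ x ∈ tsupport X, 2 < (N : ℝ) * infDist x Aᶜ := by
    obtain ⟨a, ha, hle⟩ := IsCompact.exists_forall_le' (f := fun x => infDist x Aᶜ) hXc
      (continuous_infDist_pt _).continuousOn (a := 0)
      (fun x hx => infDist_pos_of_mem hA hne (hXA hx))
    obtain ⟨N, hN⟩ := exists_N ha
    exact ⟨N, fun x hx => hN.trans_le
      (mul_le_mul_of_nonneg_left (hle x hx) (Nat.cast_nonneg N))⟩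
  set s : ℕ → En n → ℝ := fun i => mol (b i) (fun y => ψ y • ζ i y) with hsdef
  have hdc : Continuous (divg X) := divg_continuous hX1'
  have hdcs : HasCompactSupport (divg X) := divg_hasCompactSupport hXc
  have hfi : ∀ i, Integrable (fun y => ψ y • ζ i y) := fun i =>
    integrable_smul_cc hψ (hs1 i).continuous (hc i)
  have hsi : ∀ i, Integrable (fun x => s i x * divg X x) := fun i =>
    integrable_smul_cc (mol_integrable (b i) (hfi i)) hdc hdcs
  -- the left side
  have hL : ∫ x in A, (∑' i, s i x) * divg X x
      = ∑ i ∈ Finset.range N, ∫ x, s i x * divg X x := by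
    rw [← integral_finsetSum _ (fun i _ => hsi i)]
    have e : ∀ x, (∑' i, s i x) * divg X x = ∑ i ∈ Finset.range N, s i x * divg X x := by
      intro x
      by_cases hx : x ∈ tsupport X
      · rw [tsum_loc hu (hN x hx), Finset.sum_mul]
      · simp [divg_eq_zero hx]
    rw [← integral_congr_ae (Eventually.of_forall e)]
    apply setIntegral_eq_integral_of_forall_compl_eq_zero
    · intro x hx
      have : x ∉ tsupport X := fun h => hx (hXA h)
      simp [divg_eq_zero this]
  rw [hL]
  -- the new test field
  have hmolX : ∀ i, ContDiff ℝ (⊤ : ℕ∞) (mol (b i) X) := fun i =>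
    mol_contDiff (b i) (hX1'.continuous.locallyIntegrable)
  have hYi : ∀ i, ContDiff ℝ (⊤ : ℕ∞) (fun y => ζ i y • mol (b i) X y) := fun i =>
    (hs i).smul (hmolX i)
  set Y : En n → En n := fun y => ∑ i ∈ Finset.range N, ζ i y • mol (b i) X y with hY
  have hYs : ContDiff ℝ (⊤ : ℕ∞) Y := ContDiff.sum fun i _ => hYi i
  have hK : IsCompact (⋃ i ∈ Finset.range N, tsupport (ζ i)) :=
    (Finset.range N).isCompact_biUnion fun i _ => hc i
  have hYt : tsupport Y ⊆ ⋃ i ∈ Finset.range N, tsupport (ζ i) := by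
    refine closure_minimal ?_ hK.isClosed
    intro x hx
    by_contra hcon
    apply hx
    simp only [hY]
    refine Finset.sum_eq_zero fun i hi => ?_
    have : x ∉ tsupport (ζ i) := fun h => hcon (mem_biUnion hi h)
    rw [image_eq_zero_of_notMem_tsupport this, zero_smul]
  have hYT : TestField A Y :=
    ⟨hYs, hK.of_isClosed_subset (isClosed_tsupport _) hYt,
      hYt.trans (iUnion₂_subset fun i _ => ht i)⟩
  have hY1 : ∀ x, ‖Y x‖ ≤ 1 := by
    intro x
    refine (norm_sum_le _ _).trans ((Finset.sum_le_sum fun i _ => ?_).trans (hle N x))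
    rw [norm_smul, Real.norm_of_nonneg (h0 i x)]
    exact mul_le_of_le_one_right (h0 i x)
      (mol_norm_le (b i) zero_le_one hX1'.continuous.aestronglyMeasurable hX1 x)
  have hYV : ∫ x, ψ x * divg Y x ≤ (bvSeminorm A φ).toReal := by
    have e : ∫ x, ψ x * divg Y x = ∫ x in A, φ x * divg Y x := by
      rw [← integral_indicator hA.measurableSet]
      congr 1
      ext x
      by_cases hx : x ∈ A <;> simp [hψd, hx]
    rw [e, ← ENNReal.ofReal_le_iff_le_toReal hV.ne]
    exact le_iSup (fun X : {X : En n → En n // TestField A X ∧ ∀ x, ‖X x‖ ≤ 1} =>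
      ENNReal.ofReal (∫ x in A, φ x * divg X.1 x)) ⟨Y, hYT, hY1⟩
  have hYsum : ∑ i ∈ Finset.range N, ∫ x, ψ x * divg (fun y => ζ i y • mol (b i) X y) x
      = ∫ x, ψ x * divg Y x := by
    rw [← integral_finsetSum]
    · congr 1
      ext x
      rw [← Finset.mul_sum, hY, divg_sum]
      intro i _
      exact ((hYi i).differentiable (by simp)).differentiableAt
    · intro i _
      exact integrable_smul_cc hψ (divg_continuous ((hYi i).of_le one_le_top'))
        (divg_hasCompactSupport (smul_compact (hc i)))
  have hfd : ∑ i ∈ Finset.range N, ∫ x, ψ x * fderiv ℝ (ζ i) x (X x) = 0 := by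
    rw [← integral_finsetSum]
    · rw [← integral_zero (En n) ℝ]
      congr 1
      ext x
      rw [← Finset.mul_sum]
      by_cases hx : x ∈ tsupport X
      · have hd : fderiv ℝ (fun y => ∑ i ∈ Finset.range N, ζ i y) x = 0 := by
          have hev : (fun y => ∑ i ∈ Finset.range N, ζ i y) =ᶠ[𝓝 x] fun _ => 1 := by
            have hcont : Continuous fun y : En n => (N : ℝ) * infDist y Aᶜ :=
              continuous_const.mul (continuous_infDist_pt _)
            filter_upwards [(isOpen_lt continuous_const hcont).mem_nhds (hN x hx)] with y hy
            exact h1 N y (by have : 2 < (N : ℝ) * infDist y Aᶜ := hy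
                             linarith)
          rw [hev.fderiv_eq]
          simp
        rw [fderiv_fun_sum (fun i _ =>
          ((hs1 i).differentiable (by simp)).differentiableAt)] at hd
        have := congrArg (fun L : En n →L[ℝ] ℝ => L (X x)) hd
        simp only [_root_.sum_apply, _root_.zero_apply] at this
        rw [this, mul_zero]
      · simp [image_eq_zero_of_notMem_tsupport hx]
    · intro i _
      have hcc : Continuous fun x => fderiv ℝ (ζ i) x (X x) :=
        ((hs1 i).continuous_fderiv (by simp)).clm_apply hX1'.continuous
      refine integrable_smul_cc hψ hcc (HasCompactSupport.intro hXc fun x hx => ?_)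
      simp [image_eq_zero_of_notMem_tsupport hx]
  have hstep : ∀ i ∈ Finset.range N, ∫ x, s i x * divg X x
      ≤ (∫ x, ψ x * divg (fun y => ζ i y • mol (b i) X y) x) + ε i
        - ∫ x, ψ x * fderiv ℝ (ζ i) x (X x) := fun i _ =>
    step (b i) hψ (hs1 i) (hc i) hX1' hXc hX1 (hF i)
  refine (Finset.sum_le_sum hstep).trans ?_
  rw [Finset.sum_sub_distrib, Finset.sum_add_distrib, hYsum, hfd]
  have := hεc N
  linarith

end Glue
section Final

theorem strong {A : Set (En n)} (hA : IsOpen A) (hAb : Bornology.IsBounded A)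
    (hne : Aᶜ.Nonempty) {φ : En n → ℝ} (hφ : IsBVOn A φ) {δ : ℝ} (hδ : 0 < δ) :
    ∃ g : En n → ℝ, ContDiffOn ℝ (⊤ : ℕ∞) g A ∧
      ∫⁻ x in A, ‖φ x - g x‖ₑ ≤ ENNReal.ofReal (δ / 2) ∧
      ∫⁻ x in A, ‖fderiv ℝ g x‖ₑ ≤ bvSeminorm A φ + ENNReal.ofReal δ ∧
      ∀ x₀ ∈ frontier A, ∀ r > 0,
        ∫⁻ x in A ∩ ball x₀ r, ‖φ x - g x‖ₑ ≤ ENNReal.ofReal (δ * r ^ (n + 1)) := by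
  set ψ : En n → ℝ := A.indicator φ with hψd
  have hψ : Integrable ψ := (integrable_indicator_iff hA.measurableSet).2 hφ.1
  have hψA : ∀ x ∈ A, ψ x = φ x := fun x hx => indicator_of_mem hx φ
  set ε : ℕ → ℝ := fun i => δ * (1 / 2) ^ (i + 2) / ((i : ℝ) + 3) ^ (n + 1) with hεd
  have hε : ∀ i, 0 < ε i := fun i => by simp only [hεd]; positivity
  have hε1 : ∀ i, ε i ≤ δ * (1 / 2) ^ (i + 2) := fun i => by
    simp only [hεd]
    apply div_le_self (by positivity)
    exact one_le_pow₀ (by have : (0 : ℝ) ≤ i := Nat.cast_nonneg i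
                          linarith)
  obtain ⟨ζ, b, hs, h0, hc, ht, hζl, -, hle, h1, hsl, hsu, hf, hF⟩ := exists_data hAb hψ ε hε
  set s : ℕ → En n → ℝ := fun i => mol (b i) (fun y => ψ y • ζ i y) with hsdef
  have hfi : ∀ i, Integrable (fun y => ψ y • ζ i y) := fun i =>
    integrable_smul_cc hψ (hs i).continuous (hc i)
  have hei : ∀ i, Integrable (fun x => s i x - ψ x • ζ i x) := fun i =>
    (mol_integrable (b i) (hfi i)).sub (hfi i)
  have hel : ∀ i, ∫⁻ x, ‖s i x - ψ x • ζ i x‖ₑ ≤ ENNReal.ofReal (ε i) := fun i => by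
    rw [← ofReal_integral_norm_eq_lintegral_enorm (hei i)]
    exact ENNReal.ofReal_le_ofReal (hf i)
  have hg := tsum_contDiffOn hA hne (s := s)
    (fun i => mol_contDiff (b i) (hfi i).locallyIntegrable) hsu
  have hglue := fun {S : Set (En n)} (hS : MeasurableSet S) (hSA : S ⊆ A) =>
    glue_L1 hA hne (s := s) (fun i => (hei i).aestronglyMeasurable) hsu h1 hS hSA
  have hcongr : ∀ {S : Set (En n)}, MeasurableSet S → S ⊆ A →
      ∫⁻ x in S, ‖φ x - ∑' i, s i x‖ₑ = ∫⁻ x in S, ‖ψ x - ∑' i, s i x‖ₑ := by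
    intro S hS hSA
    exact setLIntegral_congr_fun hS fun x hx => by simp only [hψA x (hSA hx)]
  refine ⟨fun x => ∑' i, s i x, hg, ?_, ?_, ?_⟩
  · rw [hcongr hA.measurableSet subset_rfl]
    refine (hglue hA.measurableSet subset_rfl).trans ?_
    rw [← tsum_geo hδ.le]
    refine ENNReal.tsum_le_tsum fun i => ?_
    exact (setLIntegral_le_lintegral _ _).trans
      ((hel i).trans (ENNReal.ofReal_le_ofReal (hε1 i)))
  · have hεc : ∀ N, ∑ i ∈ Finset.range N, ε i ≤ δ / 2 := fun N =>
      (Finset.sum_le_sum fun i _ => hε1 i).trans (sum_geo_le hδ.le N)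
    refine (lintegral_fderiv_le hA hAb hne hg fun X hX hX1 =>
      glue_dual hA hne hψd hψ hφ.2 hs h0 hc ht hle h1 hsu hεc hF hX hX1).trans ?_
    rw [ENNReal.ofReal_add ENNReal.toReal_nonneg (by positivity), ENNReal.ofReal_toReal hφ.2.ne]
    gcongr
    linarith
  · intro x₀ hx₀ r hr
    have hx₀' : x₀ ∈ Aᶜ := by
      rw [hA.frontier_eq] at hx₀
      exact hx₀.2
    have hS : MeasurableSet (A ∩ ball x₀ r) := hA.measurableSet.inter measurableSet_ball
    rw [hcongr hS inter_subset_left]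
    refine (hglue hS inter_subset_left).trans ?_
    have hfin : ENNReal.ofReal (δ * r ^ (n + 1) / 2) ≤ ENNReal.ofReal (δ * r ^ (n + 1)) :=
      ENNReal.ofReal_le_ofReal (half_le_self (by positivity))
    refine le_trans ?_ hfin
    rw [← tsum_geo (by positivity)]
    refine ENNReal.tsum_le_tsum fun i => ?_
    have hi : (0 : ℝ) ≤ i := Nat.cast_nonneg i
    by_cases hir : 1 ≤ ((i : ℝ) + 3) * r
    · refine (setLIntegral_le_lintegral _ _).trans
        ((hel i).trans (ENNReal.ofReal_le_ofReal ?_))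
      simp only [hεd]
      rw [div_le_iff₀ (by positivity)]
      have h2 : 1 ≤ (((i : ℝ) + 3) * r) ^ (n + 1) := one_le_pow₀ hir
      rw [mul_pow] at h2
      have h3 : 0 ≤ δ * (1 / 2 : ℝ) ^ (i + 2) := by positivity
      calc δ * (1 / 2 : ℝ) ^ (i + 2)
          ≤ δ * (1 / 2 : ℝ) ^ (i + 2) * (((i : ℝ) + 3) ^ (n + 1) * r ^ (n + 1)) :=
            le_mul_of_one_le_right h3 h2
        _ = _ := by ring
    · have hz : ∫⁻ x in A ∩ ball x₀ r, ‖s i x - ψ x • ζ i x‖ₑ = 0 := by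
        rw [setLIntegral_congr_fun hS (g := fun _ => 0), lintegral_zero]
        intro x hx
        have hd : infDist x Aᶜ ≤ r :=
          (infDist_le_dist_of_mem hx₀').trans (mem_ball.1 hx.2).le
        have hlt : ¬ 1 ≤ ((i : ℝ) + 3) * infDist x Aᶜ := fun h =>
          hir (h.trans (mul_le_mul_of_nonneg_left hd (by positivity)))
        have e1 : s i x = 0 := by
          by_contra h
          exact hlt (hsl i x h)
        have e2 : ζ i x = 0 := by
          by_contra h
          exact hlt (hζl i x h)
        simp [e1, e2]
      rw [hz]
      exact bot_le

/-- The Bochner integral of a norm is controlled by the lower integral. -/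
theorem integral_le_of_lintegral {E : Type*} [NormedAddCommGroup E] {μ : Measure (En n)}
    {f : En n → E} (hf : AEStronglyMeasurable f μ) {c : ℝ} (hc : 0 ≤ c)
    (h : ∫⁻ x, ‖f x‖ₑ ∂μ ≤ ENNReal.ofReal c) : ∫ x, ‖f x‖ ∂μ ≤ c := by
  rw [integral_norm_eq_lintegral_enorm hf]
  exact ENNReal.toReal_le_of_le_ofReal hc h

end Final

/-- **Smooth approximation of a `BV` function preserving boundary traces**
(Remark 2.1): for `A ⊂ ℝⁿ` bounded open with Lipschitz boundary, `φ ∈ BV(A)` and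
`δ > 0`, there is `φ_δ ∈ C^∞(A)` with `∫_A |φ - φ_δ| < δ`,
`∫_A |∇φ_δ| ≤ |Dφ|(A) + δ`, and `φ = φ_δ` `ℋ^{n-1}`-a.e. on `∂A` in the sense of `BV`
traces (the averaged difference over `A ∩ B_r(x₀)` is `o(rⁿ)` for `ℋ^{n-1}`-a.e.
`x₀ ∈ ∂A`). -/
theorem smooth_approximation_BV_trace {n : ℕ} (A : Set (En n)) (hA : IsOpen A)
    (hAb : Bornology.IsBounded A) (hAl : HasLipschitzBoundary A)
    (φ : En n → ℝ) (hφ : IsBVOn A φ) (δ : ℝ) (hδ : 0 < δ) :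
    ∃ φd : En n → ℝ, ContDiffOn ℝ (⊤ : ℕ∞) φd A ∧
      (∫ x in A, |φ x - φd x|) < δ ∧
      ENNReal.ofReal (∫ x in A, ‖fderiv ℝ φd x‖) ≤ bvSeminorm A φ + ENNReal.ofReal δ ∧
      (∀ᵐ x₀ ∂((Hm n).restrict (frontier A)),
        Tendsto (fun r : ℝ => (∫ y in A ∩ ball x₀ r, |φ y - φd y|) / r ^ n)
          (𝓝[>] 0) (𝓝 0)) := by
  rcases isEmpty_or_nonempty (Fin n) with hn | hn
  · have : Subsingleton (En n) := inferInstance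
    have hconst : φ = fun _ => φ 0 := funext fun x => by rw [Subsingleton.elim x 0]
    have hcd : ContDiff ℝ (⊤ : ℕ∞) φ := by
      rw [hconst]
      exact contDiff_const
    refine ⟨φ, hcd.contDiffOn, by simpa using hδ, ?_, ?_⟩
    · have h : ∀ x, fderiv ℝ φ x = 0 := fun x => by
        rw [hconst]
        simp
      simp [h]
    · simp
  have : Nontrivial (En n) := inferInstance
  have hne : Aᶜ.Nonempty := by
    rw [nonempty_compl]
    rintro rfl
    exact NormedSpace.unbounded_univ ℝ (En n) hAb
  obtain ⟨g, hg, h1, h2, h3⟩ := strong hA hAb hne hφ hδ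
  have hm : AEStronglyMeasurable (fun x => φ x - g x) (volume.restrict A) :=
    hφ.1.aestronglyMeasurable.sub (hg.continuousOn.aestronglyMeasurable hA.measurableSet)
  refine ⟨g, hg, ?_, ?_, ?_⟩
  · refine lt_of_le_of_lt (integral_le_of_lintegral hm (by positivity) h1) (by linarith)
  · have hmf : AEStronglyMeasurable (fun x => fderiv ℝ g x) (volume.restrict A) :=
      (measurable_fderiv ℝ g).aestronglyMeasurable
    rw [integral_norm_eq_lintegral_enorm hmf]
    exact ENNReal.ofReal_toReal_le.trans h2
  · refine ae_restrict_of_forall_mem isClosed_frontier.measurableSet fun x₀ hx₀ => ?_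
    have hlim : Tendsto (fun r : ℝ => δ * r) (𝓝[>] 0) (𝓝 0) := by
      have : Tendsto (fun r : ℝ => δ * r) (𝓝 0) (𝓝 (δ * 0)) :=
        (continuous_const.mul continuous_id).tendsto 0
      rw [mul_zero] at this
      exact this.mono_left nhdsWithin_le_nhds
    refine tendsto_of_tendsto_of_tendsto_of_le_of_le' tendsto_const_nhds hlim ?_ ?_
    · filter_upwards [self_mem_nhdsWithin] with r hr
      have hr : 0 < r := hr
      exact div_nonneg (integral_nonneg fun x => abs_nonneg _) (by positivity)
    · filter_upwards [self_mem_nhdsWithin] with r hr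
      have hr : 0 < r := hr
      rw [div_le_iff₀ (by positivity)]
      have := integral_le_of_lintegral
        (hm.mono_measure (Measure.restrict_mono inter_subset_left le_rfl)) (by positivity)
        (h3 x₀ hx₀ r hr)
      refine this.trans (le_of_eq ?_)
      ring

end Paper
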